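/- arXiv:1208.5241 — 3 statements merged into one kernel-verified Lean document; each statement's English description precedes it below -/
import Mathlib

section
/- For every t > 0 and x ∈ S¹, the space derivative of the solution satisfies u_x(t,x) ≤ min(D, σ⁻¹ t⁻¹), where σ is the strong convexity constant of f and D = max(|u₀|_{L¹}⁻¹, |∂_x u₀|_{L∞}). -/
open MeasureTheory Set
open scoped ENNReal

/-- The `L^p` norm (on the circle, i.e. over one period `(0,1]`) of the `m`-th
derivative of a function `v : ℝ → ℝ` (identified with a function on `S¹ = ℝ/ℤ`). -/
noncomputable def sobLp (m : ℕ) (p : ℝ≥0∞) (v : ℝ → ℝ) : ℝ :=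
  (eLpNorm (iteratedDeriv m v) p (volume.restrict (Ioc (0:ℝ) 1))).toReal

/-- `u` is a smooth, space-periodic, zero-mean-value solution of the generalised
Burgers equation `u_t + f'(u) u_x - ν u_xx = 0` with strongly convex `f` and
nonzero initial condition. -/
structure IsBurgersSolution (f : ℝ → ℝ) (σ ν : ℝ) (u : ℝ → ℝ → ℝ) : Prop where
  hf : ContDiff ℝ (⊤ : ℕ∞) f
  hσ : 0 < σ
  hconv : ∀ y, σ ≤ iteratedDeriv 2 f y
  hν : 0 < ν
  hu : ContDiffOn ℝ (⊤ : ℕ∞) (Function.uncurry u) (Ici (0:ℝ) ×ˢ univ)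
  hper : ∀ t x, u t (x + 1) = u t x
  hpde : ∀ t, 0 < t → ∀ x,
    deriv (fun s => u s x) t + deriv f (u t x) * deriv (u t) x
      - ν * deriv (deriv (u t)) x = 0
  hmean : ∀ t, 0 ≤ t → ∫ x in Ioc (0:ℝ) 1, u t x = 0
  hinit : ∃ x, u 0 x ≠ 0

/-- The quantity `D = max(|u₀|₁⁻¹, |u₀|_{1,∞})`. -/
noncomputable def burgersD (u : ℝ → ℝ → ℝ) : ℝ :=
  max (sobLp 0 1 (u 0))⁻¹ (sobLp 1 ⊤ (u 0))

/-- `T₁ = D⁻² C̃⁻¹ / 4`. -/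
noncomputable def burgersT₁ (D Ct : ℝ) : ℝ := (D ^ 2)⁻¹ * Ct⁻¹ / 4

/-- `T₂ = max(3T₁/2, 2Dσ⁻¹)`. -/
noncomputable def burgersT₂ (σ D Ct : ℝ) : ℝ :=
  max (3 / 2 * burgersT₁ D Ct) (2 * D * σ⁻¹)

/-- Time average over `[T₁, T₂]`. -/
noncomputable def timeAvg (T₁ T₂ : ℝ) (A : ℝ → ℝ) : ℝ :=
  (T₂ - T₁)⁻¹ * ∫ t in T₁..T₂, A t

/-- The structure function `S_p(ℓ)`. -/
noncomputable def structFun (T₁ T₂ : ℝ) (u : ℝ → ℝ → ℝ) (p ℓ : ℝ) : ℝ :=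
  timeAvg T₁ T₂ (fun t => ∫ x in Ioc (0:ℝ) 1, |u t (x + ℓ) - u t x| ^ p)

open Filter Topology in
lemma aux_snd_deriv (h : ℝ → ℝ) (x : ℝ) (hc : Continuous h) (hm : ∀ y, h y ≤ h x) :
    deriv h x = 0 ∧ deriv (deriv h) x ≤ 0 := by
  have hmax : IsLocalMax h x := Eventually.of_forall hm
  have h0 : deriv h x = 0 := hmax.deriv_eq_zero
  refine ⟨h0, ?_⟩
  by_contra hcon
  push Not at hcon
  have hmin := isLocalMin_of_deriv_deriv_pos hcon h0 hc.continuousAt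
  have heq : h =ᶠ[𝓝 x] fun _ => h x := by
    filter_upwards [hmin] with y hy
    exact le_antisymm (hm y) hy
  have h2 := heq.deriv.deriv_eq
  simp at h2
  linarith

open Filter Topology in
lemma aux_time_deriv (h : ℝ → ℝ) (h' t : ℝ) (ht : 0 < t) (hd : HasDerivAt h h' t)
    (hm : ∀ s, 0 ≤ s → s ≤ t → h s ≤ h t) : 0 ≤ h' := by
  have h1 : Tendsto (slope h t) (𝓝[<] t) (𝓝 h') :=
    (hasDerivAt_iff_tendsto_slope.1 hd).mono_left
      (nhdsWithin_mono _ (fun y (hy : y < t) => ne_of_lt hy))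
  refine ge_of_tendsto h1 ?_
  have : Ioo 0 t ∈ 𝓝[<] t := Ioo_mem_nhdsLT ht
  filter_upwards [this] with s hs
  rw [slope_def_field]
  exact div_nonneg_of_nonpos (by linarith [hm s hs.1.le hs.2.le]) (by linarith [hs.2])

section
variable {f : ℝ → ℝ} {σ ν : ℝ} {u : ℝ → ℝ → ℝ}

lemma aux_slice (hsol : IsBurgersSolution f σ ν u) {t : ℝ} (ht : 0 ≤ t) :
    ContDiff ℝ (⊤ : ℕ∞) (u t) := by
  have h1 : ContDiffOn ℝ (⊤ : ℕ∞) (Function.uncurry u ∘ fun x : ℝ => (t, x)) univ :=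
    hsol.hu.comp (by fun_prop) (fun x _ => ⟨ht, mem_univ _⟩)
  exact contDiffOn_univ.1 h1

lemma aux_uniq : UniqueDiffOn ℝ (Ici (0:ℝ) ×ˢ (univ : Set ℝ)) :=
  (uniqueDiffOn_Ici 0).prod uniqueDiffOn_univ

lemma aux_v_eq (hsol : IsBurgersSolution f σ ν u) {t : ℝ} (ht : 0 ≤ t) (x : ℝ) :
    deriv (u t) x
      = fderivWithin ℝ (Function.uncurry u) (Ici (0:ℝ) ×ˢ univ) (t, x) (0, 1) := by
  have h1 : HasFDerivWithinAt (Function.uncurry u)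
      (fderivWithin ℝ (Function.uncurry u) (Ici (0:ℝ) ×ˢ univ) (t, x))
      (Ici (0:ℝ) ×ˢ univ) (t, x) :=
    (hsol.hu.differentiableOn (by simp) (t, x) ⟨ht, mem_univ _⟩).hasFDerivWithinAt
  have h2 : HasDerivWithinAt (fun y : ℝ => (t, y)) ((0 : ℝ), (1 : ℝ)) univ x :=
    ((hasDerivAt_const x t).prodMk (hasDerivAt_id x)).hasDerivWithinAt
  have h3 := h1.comp_hasDerivWithinAt x h2 (fun y _ => ⟨ht, mem_univ _⟩)
  exact (hasDerivWithinAt_univ.1 h3).deriv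

lemma aux_v_cont (hsol : IsBurgersSolution f σ ν u) :
    ContinuousOn (fun p : ℝ × ℝ => deriv (u p.1) p.2) (Ici (0:ℝ) ×ˢ univ) := by
  have h1 := hsol.hu.continuousOn_fderivWithin aux_uniq (by simp)
  have h2 : ContinuousOn (fun p : ℝ × ℝ =>
      fderivWithin ℝ (Function.uncurry u) (Ici (0:ℝ) ×ˢ univ) p (0, 1))
      (Ici (0:ℝ) ×ˢ univ) := h1.clm_apply continuousOn_const
  exact h2.congr (fun p hp => aux_v_eq hsol hp.1 p.2)

lemma aux_contDiffAt (hsol : IsBurgersSolution f σ ν u) {t : ℝ} (ht : 0 < t) (x : ℝ) :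
    ContDiffAt ℝ (⊤ : ℕ∞) (Function.uncurry u) (t, x) :=
  hsol.hu.contDiffAt (prod_mem_nhds (Ici_mem_nhds ht) Filter.univ_mem)

lemma aux_comp_fst {E : Type*} [NormedAddCommGroup E] [NormedSpace ℝ E] (G : ℝ × ℝ → E)
    (L : ℝ × ℝ →L[ℝ] E) (t x : ℝ) (h : HasFDerivAt G L (t, x)) :
    HasDerivAt (fun s => G (s, x)) (L (1, 0)) t := by
  have h3 : HasDerivAt (fun s : ℝ => (s, x)) ((1 : ℝ), (0 : ℝ)) t :=
    (hasDerivAt_id t).prodMk (hasDerivAt_const t x)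
  exact HasFDerivAt.comp_hasDerivAt (f := fun s : ℝ => (s, x)) (l := G) t h h3

lemma aux_comp_snd {E : Type*} [NormedAddCommGroup E] [NormedSpace ℝ E] (G : ℝ × ℝ → E)
    (L : ℝ × ℝ →L[ℝ] E) (t x : ℝ) (h : HasFDerivAt G L (t, x)) :
    HasDerivAt (fun y => G (t, y)) (L (0, 1)) x := by
  have h3 : HasDerivAt (fun y : ℝ => (t, y)) ((0 : ℝ), (1 : ℝ)) x :=
    (hasDerivAt_const x t).prodMk (hasDerivAt_id x)
  exact HasFDerivAt.comp_hasDerivAt (f := fun y : ℝ => (t, y)) (l := G) x h h3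

lemma aux_partials (hsol : IsBurgersSolution f σ ν u) {t : ℝ} (ht : 0 < t) (x : ℝ) :
    deriv (u t) x = fderiv ℝ (Function.uncurry u) (t, x) (0, 1) ∧
    deriv (fun s => u s x) t = fderiv ℝ (Function.uncurry u) (t, x) (1, 0) := by
  have h1 : HasFDerivAt (Function.uncurry u) (fderiv ℝ (Function.uncurry u) (t, x)) (t, x) :=
    ((aux_contDiffAt hsol ht x).differentiableAt (by simp)).hasFDerivAt
  exact ⟨(aux_comp_snd _ _ t x h1).deriv, (aux_comp_fst _ _ t x h1).deriv⟩

open Filter Topology in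
lemma aux_vt (hsol : IsBurgersSolution f σ ν u) {t : ℝ} (ht : 0 < t) (x : ℝ) :
    HasDerivAt (fun s => deriv (u s) x)
      (-(deriv (deriv f) (u t x) * deriv (u t) x ^ 2
        + deriv f (u t x) * deriv (deriv (u t)) x)
        + ν * deriv (deriv (deriv (u t))) x) t := by
  have hC := aux_contDiffAt hsol ht x
  have hD : HasFDerivAt (fderiv ℝ (Function.uncurry u))
      (fderiv ℝ (fderiv ℝ (Function.uncurry u)) (t, x)) (t, x) :=
    ((hC.fderiv_right (m := 1) (by norm_cast)).differentiableAt (by simp)).hasFDerivAt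
  have hsymm : IsSymmSndFDerivAt ℝ (Function.uncurry u) (t, x) :=
    hC.isSymmSndFDerivAt (by simp only [minSmoothness_of_isRCLikeNormedField]; exact WithTop.coe_le_coe.2 (le_top : (2 : ℕ∞) ≤ ⊤))
  set L := fderiv ℝ (fderiv ℝ (Function.uncurry u)) (t, x) with hL
  have hA : HasDerivAt (fun s => deriv (u s) x) (L (1, 0) (0, 1)) t := by
    have h1 := (aux_comp_fst _ _ t x hD).clm_apply (hasDerivAt_const t ((0 : ℝ), (1 : ℝ)))
    simp only [map_zero, add_zero] at h1
    refine h1.congr_of_eventuallyEq ?_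
    filter_upwards [Ioi_mem_nhds ht] with s hs
    exact (aux_partials hsol hs x).1
  have hB : HasDerivAt (fun y => deriv (fun s => u s y) t) (L (0, 1) (1, 0)) x := by
    have h1 := (aux_comp_snd _ _ t x hD).clm_apply (hasDerivAt_const x ((1 : ℝ), (0 : ℝ)))
    simp only [map_zero, add_zero] at h1
    refine h1.congr_of_eventuallyEq ?_
    filter_upwards with y
    exact (aux_partials hsol ht y).2
  have hu0 : ContDiff ℝ (⊤ : ℕ∞) (u t) := aux_slice hsol ht.le
  have hu1 : ContDiff ℝ (⊤ : ℕ∞) (deriv (u t)) := hu0.deriv' 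
  have hu2 : ContDiff ℝ (⊤ : ℕ∞) (deriv (deriv (u t))) := hu1.deriv'
  have hf1 : ContDiff ℝ (⊤ : ℕ∞) (deriv f) := hsol.hf.deriv'
  have d0 := (hu0.differentiable (by simp) x).hasDerivAt
  have d1 := (hu1.differentiable (by simp) x).hasDerivAt
  have d2 := (hu2.differentiable (by simp) x).hasDerivAt
  have df := (hf1.differentiable (by simp) (u t x)).hasDerivAt
  have hC' : HasDerivAt (fun y => deriv (fun s => u s y) t)
      (-(deriv (deriv f) (u t x) * deriv (u t) x * deriv (u t) x
        + deriv f (u t x) * deriv (deriv (u t)) x)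
        + ν * deriv (deriv (deriv (u t))) x) x := by
    have h1 := (((df.comp x d0).mul d1).neg).add (d2.const_mul ν)
    refine h1.congr_of_eventuallyEq ?_
    filter_upwards with y
    have := hsol.hpde t ht y
    simp only [Pi.add_apply, Pi.neg_apply, Pi.mul_apply, Function.comp]
    linarith
  have e1 := hB.unique hC'
  have e2 : L (1, 0) (0, 1) = L (0, 1) (1, 0) := hsymm _ _
  rw [e2, e1] at hA
  convert hA using 1
  ring

lemma aux_v_per (hsol : IsBurgersSolution f σ ν u) (t : ℝ) :
    Function.Periodic (deriv (u t)) 1 := by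
  intro x
  rw [← deriv_comp_add_const]
  congr 1
  funext y
  exact hsol.hper t y

lemma aux_main (hsol : IsBurgersSolution f σ ν u) (a b K : ℝ) (ha : 0 ≤ a) (hb : 0 ≤ b)
    (hK : 0 ≤ K) (hbK : b ≤ σ * K) (h0 : ∀ x, a * deriv (u 0) x ≤ K)
    (T : ℝ) (hT : 0 ≤ T) (x : ℝ) : (a + b * T) * deriv (u T) x ≤ K := by
  by_contra hcon
  push Not at hcon
  have hcont : ContinuousOn (fun p : ℝ × ℝ => (a + b * p.1) * deriv (u p.1) p.2)
      (Icc 0 T ×ˢ Icc (0:ℝ) 1) := by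
    refine ContinuousOn.mul (by fun_prop) ((aux_v_cont hsol).mono ?_)
    rintro p ⟨hp, -⟩
    exact ⟨hp.1, mem_univ _⟩
  obtain ⟨⟨t₁, x₁⟩, ⟨ht₁, hx₁⟩, hmax⟩ := (isCompact_Icc.prod isCompact_Icc).exists_isMaxOn
    (⟨(0, 0), by simp [hT]⟩ : (Icc 0 T ×ˢ Icc (0:ℝ) 1).Nonempty) hcont
  simp only at ht₁ hx₁
  have hM : ∀ s, 0 ≤ s → s ≤ T → ∀ y,
      (a + b * s) * deriv (u s) y ≤ (a + b * t₁) * deriv (u t₁) x₁ := by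
    intro s hs hsT y
    obtain ⟨z, hz, hzy⟩ := (aux_v_per hsol s).exists_mem_Ico₀ one_pos y
    rw [hzy]
    exact hmax (show (s, z) ∈ Icc 0 T ×ˢ Icc (0:ℝ) 1 from ⟨⟨hs, hsT⟩, ⟨hz.1, hz.2.le⟩⟩)
  have hgt : K < (a + b * t₁) * deriv (u t₁) x₁ := hcon.trans_le (hM T hT le_rfl x)
  have ht0 : 0 < t₁ := by
    rcases ht₁.1.eq_or_lt with h | h
    · rw [← h] at hgt
      have := h0 x₁
      simp at hgt
      linarith
    · exact h
  have hg0 : 0 ≤ a + b * t₁ := by positivity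
  have hgv : 0 < (a + b * t₁) * deriv (u t₁) x₁ := hK.trans_lt hgt
  have hg : 0 < a + b * t₁ := by
    rcases hg0.eq_or_lt with h | h
    · rw [← h] at hgv; simp at hgv
    · exact h
  have hv : 0 < deriv (u t₁) x₁ := (pos_iff_pos_of_mul_pos hgv).1 hg
  have hu1 : ContDiff ℝ (⊤ : ℕ∞) (deriv (u t₁)) := (aux_slice hsol ht0.le).deriv'
  obtain ⟨e1, e2⟩ := aux_snd_deriv (deriv (u t₁)) x₁ hu1.continuous (fun y =>
    le_of_mul_le_mul_left (hM t₁ ht0.le ht₁.2 y) hg)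
  have hd := (((hasDerivAt_id t₁).const_mul b).const_add a).mul (aux_vt hsol ht0 x₁)
  have hge := aux_time_deriv _ _ t₁ ht0 hd (fun s hs hst => hM s hs (hst.trans ht₁.2) x₁)
  have hcv := hsol.hconv (u t₁ x₁)
  rw [iteratedDeriv_succ, iteratedDeriv_one] at hcv
  simp only [id, e1, mul_zero, add_zero, mul_one] at hge
  have hσ := hsol.hσ
  set v := deriv (u t₁) x₁
  set g := a + b * t₁
  set F := deriv (deriv f) (u t₁ x₁)
  set V := deriv (deriv (deriv (u t₁))) x₁
  have i1 : g * (ν * V) ≤ 0 :=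
    mul_nonpos_of_nonneg_of_nonpos hg0 (mul_nonpos_of_nonneg_of_nonpos hsol.hν.le e2)
  have i2 : σ * (g * v ^ 2) ≤ F * (g * v ^ 2) :=
    mul_le_mul_of_nonneg_right hcv (by positivity)
  have i3 : σ * K * v < σ * (g * v) * v :=
    mul_lt_mul_of_pos_right (mul_lt_mul_of_pos_left hgt hσ) hv
  have i4 : b * v ≤ σ * K * v := mul_le_mul_of_nonneg_right hbK hv.le
  nlinarith

lemma aux_init (hsol : IsBurgersSolution f σ ν u) (x : ℝ) :
    deriv (u 0) x ≤ sobLp 1 ⊤ (u 0) := by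
  have hc : Continuous (deriv (u 0)) :=
    ((aux_slice hsol le_rfl).deriv' : ContDiff ℝ (⊤ : ℕ∞) (deriv (u 0))).continuous
  have hfin : eLpNorm (deriv (u 0)) ⊤ (volume.restrict (Ioc (0:ℝ) 1)) ≠ ⊤ := by
    obtain ⟨C, hC⟩ := isCompact_Icc.exists_bound_of_continuousOn
      (hc.continuousOn (s := Icc (0:ℝ) 1))
    have hm : MemLp (deriv (u 0)) ⊤ (volume.restrict (Ioc (0:ℝ) 1)) := by
      refine memLp_top_of_bound hc.aestronglyMeasurable C ?_
      filter_upwards [ae_restrict_mem measurableSet_Ioc] with y hy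
      exact hC y ⟨hy.1.le, hy.2⟩
    exact hm.eLpNorm_ne_top
  unfold sobLp
  rw [iteratedDeriv_one]
  set C := (eLpNorm (deriv (u 0)) ⊤ (volume.restrict (Ioc (0:ℝ) 1))).toReal with hCdef
  have hae : ∀ᵐ y ∂(volume.restrict (Ioc (0:ℝ) 1)), deriv (u 0) y ≤ C := by
    rw [eLpNorm_exponent_top] at hfin hCdef
    filter_upwards [ae_le_eLpNormEssSup (f := deriv (u 0))
      (μ := volume.restrict (Ioc (0:ℝ) 1))] with y hy
    have := ENNReal.toReal_mono hfin hy
    rw [← hCdef, toReal_enorm] at this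
    exact (le_abs_self _).trans this
  have heq : EqOn (fun y => max (deriv (u 0) y) C) (fun _ => C) (Ioc 0 1) := by
    refine Measure.eqOn_Ioc_of_ae_eq (μ := volume) ?_ (by fun_prop) (by fun_prop)
    filter_upwards [hae] with y hy
    exact max_eq_right hy
  obtain ⟨z, hz, hzx⟩ := (aux_v_per hsol 0).exists_mem_Ioc one_pos x 0
  rw [hzx]
  rw [zero_add] at hz
  exact max_eq_right_iff.1 (heq hz)

end

/-- For every `t > 0` and every `x ∈ S¹`, the space derivative of
the solution satisfies `u_x(t,x) ≤ min(D, σ⁻¹ t⁻¹)`. -/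
theorem statement0 (f : ℝ → ℝ) (σ ν : ℝ) (u : ℝ → ℝ → ℝ)
    (hsol : IsBurgersSolution f σ ν u) :
    ∀ t, 0 < t → ∀ x, deriv (u t) x ≤ min (burgersD u) (σ⁻¹ * t⁻¹) := by
  intro t ht x
  have hσ := hsol.hσ
  refine le_min ?_ ?_
  · have h := aux_main hsol 1 0 (sobLp 1 ⊤ (u 0)) zero_le_one le_rfl ENNReal.toReal_nonneg
      (mul_nonneg hσ.le ENNReal.toReal_nonneg)
      (fun y => by rw [one_mul]; exact aux_init hsol y) t ht.le x
    simp only [zero_mul, add_zero, one_mul] at h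
    exact h.trans (le_max_right _ _)
  · have h := aux_main hsol 0 1 σ⁻¹ le_rfl zero_le_one (by positivity)
      (by rw [mul_inv_cancel₀ hσ.ne'])
      (fun y => by rw [zero_mul]; positivity) t ht.le x
    simp only [one_mul, zero_add] at h
    rw [← div_eq_mul_inv, le_div_iff₀ ht, mul_comm]
    exact h
end

section
/- For every t > 0, the total variation of the solution satisfies |u(t)|_{W^{1,1}} = ∫_{S¹} |u_x(t,x)| dx = 2∫_{S¹} u_x(t,x)⁺ dx ≤ 2 min(D, σ⁻¹ t⁻¹). -/
open MeasureTheory Set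
open scoped ENNReal

lemma slice_deriv_within {f : ℝ → ℝ} {σ ν : ℝ} {u : ℝ → ℝ → ℝ}
    (hsol : IsBurgersSolution f σ ν u) {t : ℝ} (ht : 0 ≤ t) (x : ℝ) :
    HasDerivAt (u t)
      (fderivWithin ℝ (Function.uncurry u) (Ici (0:ℝ) ×ˢ univ) (t, x) (0, 1)) x := by
  have hmem : ((t, x) : ℝ × ℝ) ∈ (Ici (0:ℝ) ×ˢ univ) := ⟨ht, mem_univ _⟩
  have h1 : HasFDerivWithinAt (Function.uncurry u) _ (Ici (0:ℝ) ×ˢ univ) (t, x) :=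
    (hsol.hu.differentiableOn (by simp) (t, x) hmem).hasFDerivWithinAt
  have h2 : HasDerivWithinAt (fun y : ℝ => ((t, y) : ℝ × ℝ)) (0, 1) univ x :=
    ((hasDerivAt_const x t).prodMk (hasDerivAt_id x)).hasDerivWithinAt
  have h3 := HasFDerivWithinAt.comp_hasDerivWithinAt x h1 h2
    (fun y _ => (⟨ht, mem_univ _⟩ : ((t, y) : ℝ × ℝ) ∈ (Ici (0:ℝ) ×ˢ (univ : Set ℝ))))
  rw [hasDerivWithinAt_univ] at h3
  exact h3

lemma slice_continuousOn {f : ℝ → ℝ} {σ ν : ℝ} {u : ℝ → ℝ → ℝ}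
    (hsol : IsBurgersSolution f σ ν u) :
    ContinuousOn (fun p : ℝ × ℝ => deriv (u p.1) p.2) (Ici (0:ℝ) ×ˢ univ) := by
  have hud : UniqueDiffOn ℝ (Ici (0:ℝ) ×ˢ (univ : Set ℝ)) :=
    (uniqueDiffOn_Ici 0).prod uniqueDiffOn_univ
  have h1 := hsol.hu.continuousOn_fderivWithin hud (by simp)
  have h2 : ContinuousOn (fun p : ℝ × ℝ =>
      fderivWithin ℝ (Function.uncurry u) (Ici (0:ℝ) ×ˢ univ) p (0, 1))
      (Ici (0:ℝ) ×ˢ univ) := h1.clm_apply continuousOn_const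
  refine h2.congr ?_
  rintro ⟨t, x⟩ ⟨ht, _⟩
  exact (slice_deriv_within hsol ht x).deriv

lemma slice_deriv_continuous {f : ℝ → ℝ} {σ ν : ℝ} {u : ℝ → ℝ → ℝ}
    (hsol : IsBurgersSolution f σ ν u) {t : ℝ} (ht : 0 ≤ t) :
    Continuous (deriv (u t)) := by
  have h := (slice_continuousOn hsol).comp_continuous
    (f := fun x : ℝ => ((t, x) : ℝ × ℝ)) (by fun_prop) (fun x => ⟨ht, mem_univ _⟩)
  exact h

lemma slice_deriv_periodic {f : ℝ → ℝ} {σ ν : ℝ} {u : ℝ → ℝ → ℝ}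
    (hsol : IsBurgersSolution f σ ν u) (t : ℝ) :
    Function.Periodic (deriv (u t)) 1 := by
  intro x
  have h : (fun y => u t (y + 1)) = u t := funext (hsol.hper t)
  have h2 := deriv_comp_add_const (u t) 1 x
  rw [h] at h2
  exact h2.symm

lemma second_deriv_nonpos_of_max {g : ℝ → ℝ} {x : ℝ} (hg : ContinuousAt g x)
    (hmax : ∀ y, g y ≤ g x) : deriv (deriv g) x ≤ 0 := by
  by_contra! hpos
  have hloc : IsLocalMax g x := Filter.Eventually.of_forall hmax
  have hmin := isLocalMin_of_deriv_deriv_pos hpos hloc.deriv_eq_zero hg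
  have heq : g =ᶠ[nhds x] fun _ => g x := by
    filter_upwards [hmin] with y hy
    exact le_antisymm (hmax y) hy
  have := heq.deriv.deriv_eq
  simp at this
  linarith

lemma deriv_nonneg_of_left_max {h : ℝ → ℝ} {t d : ℝ} (ht : 0 < t) (hd : HasDerivAt h d t)
    (hmax : ∀ s, 0 ≤ s → s ≤ t → h s ≤ h t) : 0 ≤ d := by
  have h1 := (hd.hasDerivWithinAt (s := Iio t))
  rw [hasDerivWithinAt_iff_tendsto_slope' (by simp)] at h1
  refine ge_of_tendsto h1 ?_
  have : ∀ᶠ s in nhdsWithin t (Iio t), 0 < s :=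
    nhdsWithin_le_nhds (lt_mem_nhds ht)
  filter_upwards [this, self_mem_nhdsWithin] with s hs hst
  rw [slope_def_field]
  have h2 := hmax s hs.le (le_of_lt hst)
  have h3 : s < t := hst
  exact div_nonneg_of_nonpos (by linarith) (by linarith)

/-- The equation satisfied by `v = u_x`, at a spatial critical point. -/
lemma burgers_deriv_eq {f : ℝ → ℝ} {σ ν : ℝ} {u : ℝ → ℝ → ℝ}
    (hsol : IsBurgersSolution f σ ν u) {t : ℝ} (ht : 0 < t) (x : ℝ) :
    HasDerivAt (fun s => deriv (u s) x)
      (ν * deriv (deriv (deriv (u t))) x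
        - (iteratedDeriv 2 f (u t x) * (deriv (u t) x) ^ 2
          + deriv f (u t x) * deriv (deriv (u t)) x)) t := by
  set O : Set (ℝ × ℝ) := Ioi (0:ℝ) ×ˢ univ with hO
  have hOo : IsOpen O := isOpen_Ioi.prod isOpen_univ
  set U : ℝ × ℝ → ℝ := Function.uncurry u with hU
  have hUs : ContDiffOn ℝ (⊤ : ℕ∞) U O :=
    hsol.hu.mono (prod_mono Ioi_subset_Ici_self subset_rfl)
  -- partial derivatives of functions smooth on `O`
  have hx : ∀ G : ℝ × ℝ → ℝ, ContDiffOn ℝ (⊤ : ℕ∞) G O → ∀ s, 0 < s → ∀ y,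
      HasDerivAt (fun z => G (s, z)) (fderiv ℝ G (s, y) (0, 1)) y := by
    intro G hG s hs y
    have h1 : HasFDerivAt G _ (s, y) :=
      ((hG.differentiableOn (by simp)).differentiableAt
        (hOo.mem_nhds (show (s, y) ∈ O from ⟨hs, mem_univ _⟩))).hasFDerivAt
    exact h1.comp_hasDerivAt y ((hasDerivAt_const y s).prodMk (hasDerivAt_id y))
  have htt : ∀ G : ℝ × ℝ → ℝ, ContDiffOn ℝ (⊤ : ℕ∞) G O → ∀ s, 0 < s → ∀ y,
      HasDerivAt (fun z => G (z, y)) (fderiv ℝ G (s, y) (1, 0)) s := by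
    intro G hG s hs y
    have h1 : HasFDerivAt G _ (s, y) :=
      ((hG.differentiableOn (by simp)).differentiableAt
        (hOo.mem_nhds (show (s, y) ∈ O from ⟨hs, mem_univ _⟩))).hasFDerivAt
    exact h1.comp_hasDerivAt s ((hasDerivAt_id s).prodMk (hasDerivAt_const s y))
  have hsm : ∀ G : ℝ × ℝ → ℝ, ContDiffOn ℝ (⊤ : ℕ∞) G O → ∀ e : ℝ × ℝ,
      ContDiffOn ℝ (⊤ : ℕ∞) (fun p => fderiv ℝ G p e) O := by
    intro G hG e
    exact (hG.fderiv_of_isOpen hOo (by simp)).clm_apply contDiffOn_const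
  set V : ℝ × ℝ → ℝ := fun p => fderiv ℝ U p (0, 1) with hV
  set W : ℝ × ℝ → ℝ := fun p => fderiv ℝ V p (0, 1) with hW
  set P : ℝ × ℝ → ℝ := fun p => fderiv ℝ U p (1, 0) with hP
  have hVs : ContDiffOn ℝ (⊤ : ℕ∞) V O := hsm U hUs _
  have hWs : ContDiffOn ℝ (⊤ : ℕ∞) W O := hsm V hVs _
  have hPs : ContDiffOn ℝ (⊤ : ℕ∞) P O := hsm U hUs _
  have eV : ∀ s, 0 < s → deriv (u s) = fun y => V (s, y) := fun s hs =>
    funext fun y => (hx U hUs s hs y).deriv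
  have eW : ∀ s, 0 < s → deriv (deriv (u s)) = fun y => W (s, y) := fun s hs => by
    rw [eV s hs]
    exact funext fun y => (hx V hVs s hs y).deriv
  have eP : ∀ y, P (t, y) = ν * W (t, y) - deriv f (u t y) * V (t, y) := by
    intro y
    have h1 := hsol.hpde t ht y
    have h2 : deriv (fun s => u s y) t = P (t, y) := (htt U hUs t ht y).deriv
    rw [h2, eW t ht, eV t ht] at h1
    simp only at h1
    linarith
  -- symmetry of second derivatives
  have hsymm : fderiv ℝ V (t, x) (1, 0) = fderiv ℝ P (t, x) (0, 1) := by
    have hat : ContDiffAt ℝ (⊤ : ℕ∞) U (t, x) := hUs.contDiffAt (hOo.mem_nhds ⟨ht, mem_univ _⟩)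
    have hs : IsSymmSndFDerivAt ℝ U (t, x) := by
      refine hat.isSymmSndFDerivAt ?_
      simp only [minSmoothness_of_isRCLikeNormedField]
      exact WithTop.coe_le_coe.2 (le_top (a := (2 : ℕ∞)))
    have hd : DifferentiableAt ℝ (fderiv ℝ U) (t, x) :=
      (hat.fderiv_right (m := 1) (WithTop.coe_le_coe.2 (le_top (a := (2 : ℕ∞))))).differentiableAt (by simp)
    have k : ∀ e : ℝ × ℝ, ∀ e' : ℝ × ℝ, fderiv ℝ (fun p => fderiv ℝ U p e) (t, x) e'
        = fderiv ℝ (fderiv ℝ U) (t, x) e' e := by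
      intro e e'
      have := (hd.hasFDerivAt.clm_apply (hasFDerivAt_const e (t, x))).fderiv
      rw [this]; simp
    rw [hV, hP, k, k]
    exact hs.eq _ _
  have hf1 : Differentiable ℝ (deriv f) := by
    have := hsol.hf.differentiable_iteratedDeriv 1 (by exact_mod_cast WithTop.coe_lt_top 1)
    simpa [iteratedDeriv_one] using this
  have hf2 : HasDerivAt (deriv f) (iteratedDeriv 2 f (u t x)) (u t x) := by
    have := (hf1 (u t x)).hasDerivAt
    rwa [show iteratedDeriv 2 f = deriv (deriv f) by
      rw [iteratedDeriv_succ, iteratedDeriv_one]]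
  have hPx := hx P hPs t ht x
  have hWx := hx W hWs t ht x
  have hVx := hx V hVs t ht x
  have hUx : HasDerivAt (u t) (V (t, x)) x := hx U hUs t ht x
  have hPx2 := (hWx.const_mul ν).sub ((hf2.comp x hUx).mul hVx)
  have hPe : (fun z => P (t, z)) = (fun z => ν * W (t, z)) - (deriv f ∘ u t) * (fun z => V (t, z)) :=
    funext fun y => eP y
  have hkey := hPx.unique (by rw [hPe]; exact hPx2)
  have hVt := htt V hVs t ht x
  have hVt2 : HasDerivAt (fun s => deriv (u s) x) (fderiv ℝ V (t, x) (1, 0)) t := by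
    refine hVt.congr_of_eventuallyEq ?_
    filter_upwards [lt_mem_nhds ht] with s hs
    rw [eV s hs]
  convert hVt2 using 1
  rw [hsymm, hkey, eW t ht, eV t ht, hWx.deriv]
  simp only [Function.comp]
  ring

/-- Maximum principle for `(a + b t) u_x`. -/
lemma oleinik {f : ℝ → ℝ} {σ ν : ℝ} {u : ℝ → ℝ → ℝ}
    (hsol : IsBurgersSolution f σ ν u) {a b M : ℝ} (ha : 0 ≤ a) (hb : 0 ≤ b)
    (hM : 0 ≤ M) (hM0 : ∀ x, deriv (u 0) x ≤ M) {T : ℝ} (hT : 0 < T) (x : ℝ) :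
    (a + b * T) * deriv (u T) x ≤ max (a * M) (b / σ) := by
  have hσ := hsol.hσ
  have hK : IsCompact (Icc (0:ℝ) T ×ˢ Icc (0:ℝ) 1) := isCompact_Icc.prod isCompact_Icc
  have hc : ContinuousOn (fun p : ℝ × ℝ => (a + b * p.1) * deriv (u p.1) p.2)
      (Icc (0:ℝ) T ×ˢ Icc (0:ℝ) 1) := by
    refine ContinuousOn.mul (by fun_prop) ((slice_continuousOn hsol).mono ?_)
    exact prod_mono Icc_subset_Ici_self (subset_univ _)
  obtain ⟨⟨t₀, x₀⟩, ⟨ht₀, hx₀⟩, hmax⟩ := hK.exists_isMaxOn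
    ⟨(0, 0), ⟨le_rfl, hT.le⟩, ⟨le_rfl, zero_le_one⟩⟩ hc
  have hmax' : ∀ s ∈ Icc (0:ℝ) T, ∀ y,
      (a + b * s) * deriv (u s) y ≤ (a + b * t₀) * deriv (u t₀) x₀ := by
    intro s hs y
    obtain ⟨z, hz, hyz⟩ := (slice_deriv_periodic hsol s).exists_mem_Ico₀ one_pos y
    rw [hyz]
    exact hmax (show ((s, z) : ℝ × ℝ) ∈ Icc (0:ℝ) T ×ˢ Icc (0:ℝ) 1 from
      ⟨hs, Ico_subset_Icc_self hz⟩)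
  refine (hmax' T ⟨hT.le, le_rfl⟩ x).trans ?_
  simp only [mem_Icc] at ht₀
  by_cases hv : deriv (u t₀) x₀ ≤ 0
  · refine le_trans ?_ (le_max_of_le_left (mul_nonneg ha hM))
    exact mul_nonpos_of_nonneg_of_nonpos (by nlinarith [mul_nonneg hb ht₀.1]) hv
  push Not at hv
  rcases ht₀.1.eq_or_lt with h0 | h0
  · rw [← h0]
    refine le_max_of_le_left ?_
    simpa using mul_le_mul_of_nonneg_left (hM0 x₀) ha
  have hcpos : 0 ≤ a + b * t₀ := by positivity
  rcases hcpos.eq_or_lt with hc0 | hc0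
  · rw [← hc0, zero_mul]
    exact le_max_of_le_left (mul_nonneg ha hM)
  refine le_max_of_le_right ?_
  have hsp : ∀ y, deriv (u t₀) y ≤ deriv (u t₀) x₀ := fun y =>
    le_of_mul_le_mul_left (hmax' t₀ ht₀ y) hc0
  have hxx := second_deriv_nonpos_of_max
    (slice_deriv_continuous hsol h0.le).continuousAt hsp
  have hx0 : deriv (deriv (u t₀)) x₀ = 0 :=
    IsLocalMax.deriv_eq_zero (Filter.Eventually.of_forall hsp)
  have hvt := burgers_deriv_eq hsol h0 x₀
  have hlin : HasDerivAt (fun s : ℝ => a + b * s) b t₀ := by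
    simpa using ((hasDerivAt_id t₀).const_mul b).const_add a
  have hnn := deriv_nonneg_of_left_max h0 (hlin.mul hvt)
    (fun s hs hst => hmax' s ⟨hs, hst.trans ht₀.2⟩ x₀)
  rw [hx0] at hnn
  set v := deriv (u t₀) x₀
  set c := a + b * t₀
  have hfc := hsol.hconv (u t₀ x₀)
  have h1 : ν * deriv (deriv (deriv (u t₀))) x₀ ≤ 0 :=
    mul_nonpos_of_nonneg_of_nonpos hsol.hν.le hxx
  have h2 : σ * v ^ 2 ≤ iteratedDeriv 2 f (u t₀ x₀) * v ^ 2 :=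
    mul_le_mul_of_nonneg_right hfc (sq_nonneg v)
  have h3 : 0 ≤ b * v + c * (-(σ * v ^ 2)) := by
    refine hnn.trans ?_
    have := mul_le_mul_of_nonneg_left (show ν * deriv (deriv (deriv (u t₀))) x₀
        - (iteratedDeriv 2 f (u t₀ x₀) * v ^ 2 + deriv f (u t₀ x₀) * 0) ≤ -(σ * v ^ 2) by
        linarith) hc0.le
    linarith
  have h4 : 0 ≤ v * (b - c * v * σ) := by nlinarith
  have h5 : 0 ≤ b - c * v * σ := nonneg_of_mul_nonneg_right h4 hv
  rw [le_div_iff₀ hσ]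
  linarith

lemma deriv_init_le {f : ℝ → ℝ} {σ ν : ℝ} {u : ℝ → ℝ → ℝ}
    (hsol : IsBurgersSolution f σ ν u) (x : ℝ) :
    deriv (u 0) x ≤ sobLp 1 ⊤ (u 0) := by
  have hc := slice_deriv_continuous hsol le_rfl
  set g := deriv (u 0) with hg
  have hsob : sobLp 1 ⊤ (u 0) = (eLpNormEssSup g (volume.restrict (Ioc (0:ℝ) 1))).toReal := by
    rw [sobLp, iteratedDeriv_one, eLpNorm_exponent_top]
  set M := sobLp 1 ⊤ (u 0) with hMdef
  obtain ⟨C, hC⟩ := isCompact_Icc.exists_bound_of_continuousOn (s := Icc (0:ℝ) 1) hc.continuousOn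
  have hfin : eLpNormEssSup g (volume.restrict (Ioc (0:ℝ) 1)) < ⊤ := by
    refine eLpNormEssSup_lt_top_of_ae_bound (C := C) ?_
    filter_upwards [ae_restrict_mem measurableSet_Ioc] with y hy
    exact hC y (Ioc_subset_Icc_self hy)
  have hae : ∀ᵐ y ∂(volume.restrict (Ioc (0:ℝ) 1)), g y ≤ M := by
    filter_upwards [ae_le_eLpNormEssSup (f := g) (μ := volume.restrict (Ioc (0:ℝ) 1))] with y hy
    have := ENNReal.toReal_mono hfin.ne hy
    rw [toReal_enorm, ← hsob] at this
    exact (le_abs_self _).trans this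
  have hIoo : ∀ y ∈ Ioo (0:ℝ) 1, g y ≤ M := by
    have hae2 : ∀ᵐ y ∂(volume : Measure ℝ), y ∈ Ioc (0:ℝ) 1 → g y ≤ M :=
      (ae_restrict_iff' measurableSet_Ioc).1 hae
    have hopen : IsOpen (Ioo (0:ℝ) 1 ∩ {y | M < g y}) :=
      isOpen_Ioo.inter (isOpen_lt continuous_const hc)
    have hz : volume (Ioo (0:ℝ) 1 ∩ {y | M < g y}) = 0 := by
      refine measure_mono_null ?_ hae2
      rintro y ⟨hy1, hy2⟩ hcon
      exact absurd (hcon (Ioo_subset_Ioc_self hy1)) (not_le.2 hy2)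
    rw [hopen.measure_eq_zero_iff (μ := volume)] at hz
    intro y hy
    by_contra! hlt
    have : y ∈ (∅ : Set ℝ) := hz ▸ ⟨hy, hlt⟩
    exact this
  have hIcc : ∀ y ∈ Icc (0:ℝ) 1, g y ≤ M := by
    intro y hy
    rw [← closure_Ioo (zero_ne_one' ℝ)] at hy
    exact le_on_closure hIoo hc.continuousOn continuousOn_const hy
  obtain ⟨z, hz, hxz⟩ := (slice_deriv_periodic hsol 0).exists_mem_Ico₀ one_pos x
  rw [hg, hxz]
  exact hIcc z (Ico_subset_Icc_self hz)

/-- For every `t > 0`, the total variation satisfies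
`|u(t)|_{1,1} = ∫_{S¹} |u_x(t)| = 2 ∫_{S¹} u_x(t)⁺ ≤ 2 min(D, σ⁻¹ t⁻¹)`. -/
theorem statement2 (f : ℝ → ℝ) (σ ν : ℝ) (u : ℝ → ℝ → ℝ)
    (hsol : IsBurgersSolution f σ ν u) :
    ∀ t, 0 < t →
      sobLp 1 1 (u t) = ∫ x in Ioc (0:ℝ) 1, |deriv (u t) x| ∧
      (∫ x in Ioc (0:ℝ) 1, |deriv (u t) x|)
        = 2 * ∫ x in Ioc (0:ℝ) 1, max (deriv (u t) x) 0 ∧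
      2 * (∫ x in Ioc (0:ℝ) 1, max (deriv (u t) x) 0)
        ≤ 2 * min (burgersD u) (σ⁻¹ * t⁻¹) := by
  intro t ht
  have hc := slice_deriv_continuous hsol ht.le
  have hi : ∀ g : ℝ → ℝ, Continuous g → IntegrableOn g (Ioc (0:ℝ) 1) := fun g hg =>
    (hg.continuousOn.integrableOn_Icc (a := (0:ℝ)) (b := 1)).mono_set Ioc_subset_Icc_self
  have hM : 0 ≤ sobLp 1 ⊤ (u 0) := ENNReal.toReal_nonneg
  have hσ := hsol.hσ
  refine ⟨?_, ?_, ?_⟩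
  · rw [sobLp, iteratedDeriv_one, eLpNorm_one_eq_lintegral_enorm]
    exact (integral_norm_eq_lintegral_enorm (hi _ hc).1).symm
  · have hz : ∫ x in Ioc (0:ℝ) 1, deriv (u t) x = 0 := by
      rw [← intervalIntegral.integral_of_le zero_le_one,
        intervalIntegral.integral_deriv_eq_sub
          (fun x _ => (slice_deriv_within hsol ht.le x).differentiableAt)
          (hc.intervalIntegrable _ _)]
      have := hsol.hper t 0
      rw [zero_add] at this
      linarith
    have he : ∀ x, |deriv (u t) x| = 2 * max (deriv (u t) x) 0 - deriv (u t) x := by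
      intro x
      rcases le_total (deriv (u t) x) 0 with h | h
      · rw [abs_of_nonpos h, max_eq_right h]; ring
      · rw [abs_of_nonneg h, max_eq_left h]; ring
    simp only [he]
    rw [integral_sub (hi _ (by fun_prop)) (hi _ hc), hz, integral_const_mul, sub_zero]
  · refine mul_le_mul_of_nonneg_left ?_ zero_le_two
    have hB : ∀ x, max (deriv (u t) x) 0 ≤ min (burgersD u) (σ⁻¹ * t⁻¹) := by
      intro x
      have hD : sobLp 1 ⊤ (u 0) ≤ burgersD u := le_max_right _ _
      refine max_le (le_min ?_ ?_) (le_min (hM.trans hD) (by positivity))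
      · have := oleinik hsol zero_le_one le_rfl hM (deriv_init_le hsol) ht x
        simp only [zero_mul, add_zero, one_mul, zero_div, max_eq_left hM] at this
        exact this.trans hD
      · have := oleinik hsol le_rfl zero_le_one hM (deriv_init_le hsol) ht x
        rw [zero_mul, zero_add, one_mul, max_eq_right (by positivity), one_div] at this
        rw [← div_eq_mul_inv, le_div_iff₀ ht]
        linarith
    calc (∫ x in Ioc (0:ℝ) 1, max (deriv (u t) x) 0)
        ≤ ∫ _x in Ioc (0:ℝ) 1, min (burgersD u) (σ⁻¹ * t⁻¹) :=
          integral_mono (hi _ (by fun_prop)) (hi _ continuous_const) hB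
      _ = min (burgersD u) (σ⁻¹ * t⁻¹) := by simp
end

section
/- Let f : ℝ → ℝ be C^∞, let m ≥ 1 be an integer, and let A > 0. There is a constant C̃ > 0, depending only on m, A and the C^{m+1}-norm of f on [−A,A], such that for every C^∞ zero-mean-value function v on S¹ with |v|_{L∞} ≤ A, one has |∫_{S¹} v^{(m)}(x) · (f(v))^{(m+1)}(x) dx| ≤ C̃ ‖v‖_m ‖v‖_{m+1}. -/
open MeasureTheory Set
open scoped ENNReal

lemma aux_hasDerivAt (q : ℝ) (hq : 0 < q) (t : ℝ) :
    HasDerivAt (fun t : ℝ => |t| ^ q * t) ((q + 1) * |t| ^ q) t := by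
  by_cases ht : t = 0
  · subst ht
    rw [hasDerivAt_iff_tendsto_slope]
    have h1 : Filter.Tendsto (fun t : ℝ => |t| ^ q) (nhdsWithin 0 {0}ᶜ)
        (nhds ((q + 1) * |(0:ℝ)| ^ q)) := by
      have : Continuous (fun t : ℝ => |t| ^ q) :=
        continuous_abs.rpow_const (fun _ => Or.inr hq.le)
      have h2 := this.tendsto 0
      simp only [abs_zero, Real.zero_rpow hq.ne', mul_zero] at h2 ⊢
      exact h2.mono_left nhdsWithin_le_nhds
    refine h1.congr' ?_
    filter_upwards [self_mem_nhdsWithin] with x hx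
    have hx : x ≠ 0 := hx
    simp [slope_def_field, hx]
  · have hpos : 0 < |t| := abs_pos.mpr ht
    have h := ((hasDerivAt_abs ht).rpow_const (p := q) (Or.inl hpos.ne')).mul (hasDerivAt_id t)
    refine h.congr_deriv ?_
    have h2 : (SignType.sign t : ℝ) * t = |t| := sign_mul_self t
    have h3 : |t| ^ q = |t| ^ (q - 1) * |t| := by
      rw [← Real.rpow_add_one hpos.ne']; ring_nf
    simp only [id, mul_one]
    calc (SignType.sign t : ℝ) * q * |t| ^ (q - 1) * t + |t| ^ q
        = q * (|t| ^ (q - 1) * ((SignType.sign t : ℝ) * t)) + |t| ^ q := by ring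
      _ = _ := by rw [h2, ← h3]; ring

lemma aux_step (q : ℝ) (hq : 0 < q) (w w1 w2 : ℝ → ℝ)
    (hw : ∀ x, HasDerivAt w (w1 x) x) (hw1 : ∀ x, HasDerivAt w1 (w2 x) x)
    (hc : Continuous w2) (h0 : w 1 = w 0) (h1 : w1 1 = w1 0) :
    ∫ x in (0:ℝ)..1, |w1 x| ^ (q + 2) ≤
      (q + 1) * ∫ x in (0:ℝ)..1, |w x| * |w1 x| ^ q * |w2 x| := by
  have cw : Continuous w := continuous_iff_continuousAt.2 fun x => (hw x).continuousAt
  have cw1 : Continuous w1 := continuous_iff_continuousAt.2 fun x => (hw1 x).continuousAt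
  have cq : Continuous (fun x => |w1 x| ^ q) :=
    cw1.abs.rpow_const (fun _ => Or.inr hq.le)
  have key := intervalIntegral.integral_mul_deriv_eq_deriv_mul (a := 0) (b := 1)
    (u := fun x => |w1 x| ^ q * w1 x) (u' := fun x => (q + 1) * |w1 x| ^ q * w2 x)
    (v := w) (v' := w1)
    (fun x _ => (aux_hasDerivAt q hq (w1 x)).comp x (hw1 x)) (fun x _ => hw x)
    (((continuous_const.mul cq).mul hc).intervalIntegrable _ _) (cw1.intervalIntegrable _ _)
  simp only [h0, h1, sub_self, zero_sub] at key
  have e : ∀ x, |w1 x| ^ (q + 2) = |w1 x| ^ q * w1 x * w1 x := by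
    intro x
    rw [Real.rpow_add_of_nonneg (abs_nonneg _) hq.le (by norm_num)]
    have : |w1 x| ^ (2:ℝ) = w1 x ^ 2 := by
      rw [Real.rpow_two, sq_abs]
    rw [this]; ring
  simp only [e]
  rw [key, ← intervalIntegral.integral_neg, ← intervalIntegral.integral_const_mul]
  refine intervalIntegral.integral_mono_on (by norm_num) ?_ ?_ ?_
  · exact (((continuous_const.mul cq).mul hc).mul cw).neg.intervalIntegrable _ _
  · exact (continuous_const.mul ((cw.abs.mul cq).mul hc.abs)).intervalIntegrable _ _
  · intro x _
    refine (neg_le_abs _).trans (le_of_eq ?_)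
    rw [abs_mul, abs_mul, abs_mul, abs_of_pos (by linarith : 0 < q + 1),
      abs_of_nonneg (Real.rpow_nonneg (abs_nonneg (w1 x)) q)]
    ring

lemma aux_young (w1 w2 w3 ε : ℝ) (h1 : 0 ≤ w1) (h2 : 0 ≤ w2) (h3 : 0 < w3)
    (hs : w1 + w2 + w3 = 1) (hε : 0 < ε) :
    ∃ C > 0, ∀ X Y Z : ℝ, 0 ≤ X → 0 ≤ Y → 0 ≤ Z →
      X ^ w1 * Y ^ w2 * Z ^ w3 ≤ ε * X + ε * Y + C * Z := by
  refine ⟨(ε ^ (-(w1 + w2))) ^ (1 / w3), by positivity, ?_⟩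
  intro X Y Z hX hY hZ
  set C := (ε ^ (-(w1 + w2))) ^ (1 / w3) with hC
  have hCpos : 0 < C := by positivity
  have h := Real.geom_mean_le_arith_mean3_weighted h1 h2 h3.le
    (mul_nonneg hε.le hX) (mul_nonneg hε.le hY) (mul_nonneg hCpos.le hZ) hs
  have hC3 : C ^ w3 = ε ^ (-(w1 + w2)) := by
    rw [hC, ← Real.rpow_mul (by positivity), one_div, inv_mul_cancel₀ h3.ne', Real.rpow_one]
  have hone : ε ^ w1 * ε ^ w2 * C ^ w3 = 1 := by
    rw [hC3, ← Real.rpow_add hε, ← Real.rpow_add hε]; simp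
  rw [Real.mul_rpow hε.le hX, Real.mul_rpow hε.le hY, Real.mul_rpow hCpos.le hZ] at h
  have h' : X ^ w1 * Y ^ w2 * Z ^ w3 ≤ w1 * (ε * X) + w2 * (ε * Y) + w3 * (C * Z) := by
    calc X ^ w1 * Y ^ w2 * Z ^ w3 = (ε ^ w1 * ε ^ w2 * C ^ w3) * (X ^ w1 * Y ^ w2 * Z ^ w3) := by
          rw [hone, one_mul]
      _ = _ := by ring
      _ ≤ _ := h
  have a1 : w1 * (ε * X) ≤ 1 * (ε * X) := by gcongr; linarith
  have a2 : w2 * (ε * Y) ≤ 1 * (ε * Y) := by gcongr; linarith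
  have a3 : w3 * (C * Z) ≤ 1 * (C * Z) := by gcongr; linarith
  linarith

/-- `∫ |v^(k)|^(2m/k)`. -/
noncomputable def auxI (m k : ℕ) (v : ℝ → ℝ) : ℝ :=
  ∫ x in (0:ℝ)..1, |iteratedDeriv k v x| ^ (2 * m / k : ℝ)

lemma aux_cont {v : ℝ → ℝ} (hv : ContDiff ℝ (⊤ : ℕ∞) v) (k : ℕ) :
    Continuous (iteratedDeriv k v) :=
  hv.continuous_iteratedDeriv k (by exact_mod_cast le_top)

lemma aux_der {v : ℝ → ℝ} (hv : ContDiff ℝ (⊤ : ℕ∞) v) (k : ℕ) (x : ℝ) :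
    HasDerivAt (iteratedDeriv k v) (iteratedDeriv (k + 1) v x) x := by
  rw [iteratedDeriv_succ]
  exact (hv.differentiable_iteratedDeriv k (by exact_mod_cast ENat.natCast_lt_top k) x).hasDerivAt

lemma aux_per {v : ℝ → ℝ} (hp : ∀ x, v (x + 1) = v x) (k : ℕ) :
    iteratedDeriv k v 1 = iteratedDeriv k v 0 := by
  have h := congrFun (iteratedDeriv_comp_add_const k v 1) 0
  simp only [hp, zero_add] at h
  exact h.symm

lemma aux_contI {v : ℝ → ℝ} (hv : ContDiff ℝ (⊤ : ℕ∞) v) (k : ℕ) (p : ℝ) (hp : 0 ≤ p) :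
    Continuous (fun x => |iteratedDeriv k v x| ^ p) :=
  (aux_cont hv k).abs.rpow_const (fun _ => Or.inr hp)

lemma auxI_nonneg (m k : ℕ) (v : ℝ → ℝ) : 0 ≤ auxI m k v :=
  intervalIntegral.integral_nonneg (by norm_num) fun _ _ => Real.rpow_nonneg (abs_nonneg _) _

lemma aux_rpow (a p w r : ℝ) (ha : 0 ≤ a) (h : p * w = r) : (a ^ p) ^ w = a ^ r := by
  rw [← Real.rpow_mul ha, h]

lemma aux_gn (m : ℕ) (A : ℝ) (hA : 0 < A) (j : ℕ) (hj : j + 1 < m) :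
    ∃ C > 0, ∀ v : ℝ → ℝ, ContDiff ℝ (⊤ : ℕ∞) v → (∀ x, v (x + 1) = v x) →
      (∀ x, |v x| ≤ A) → auxI m (j + 1) v ≤ C * auxI m (j + 2) v := by
  induction j with
  | zero =>
    have hm : (1:ℝ) < m := by exact_mod_cast hj
    have hm0 : (0:ℝ) < m := by linarith
    set q : ℝ := 2 * m - 2 with hq
    have hq0 : 0 < q := by linarith
    obtain ⟨C, hC, hY⟩ := aux_young 0 (1 - 1 / m) (1 / m) (1 / (2 * (q + 1) * A)) le_rfl
      (by rw [sub_nonneg, div_le_one hm0]; exact hm.le) (by positivity) (by ring) (by positivity)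
    refine ⟨2 * ((q + 1) * A * C), by positivity, ?_⟩
    intro v hv hp hb
    have hs := aux_step q hq0 v (iteratedDeriv 1 v) (iteratedDeriv 2 v)
      (fun x => by simpa using aux_der hv 0 x) (fun x => aux_der hv 1 x) (aux_cont hv 2)
      (by simpa using hp 0) (aux_per hp 1)
    have c0 : Continuous v := hv.continuous
    have c1 := aux_contI hv 1 q hq0.le
    have c1' := aux_contI hv 1 (2 * m / (1:ℕ)) (by positivity)
    have c2 := (aux_cont hv 2).abs
    have c2' := aux_contI hv 2 (2 * m / (2:ℕ)) (by positivity)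
    have hle : ∫ x in (0:ℝ)..1, |v x| * |iteratedDeriv 1 v x| ^ q * |iteratedDeriv 2 v x| ≤
        ∫ x in (0:ℝ)..1, (A * (1 / (2 * (q + 1) * A)) * |iteratedDeriv 1 v x| ^ (2 * m / (1:ℕ) : ℝ)
          + A * C * |iteratedDeriv 2 v x| ^ (2 * m / (2:ℕ) : ℝ)) := by
      refine intervalIntegral.integral_mono_on (by norm_num)
        (((c0.abs.mul c1).mul c2).intervalIntegrable _ _)
        (((continuous_const.mul c1').add (continuous_const.mul c2')).intervalIntegrable _ _) ?_
      intro x _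
      have y := hY 0 (|iteratedDeriv 1 v x| ^ (2 * m / (1:ℕ) : ℝ))
        (|iteratedDeriv 2 v x| ^ (2 * m / (2:ℕ) : ℝ)) le_rfl (by positivity) (by positivity)
      rw [Real.rpow_zero, aux_rpow _ _ _ q (abs_nonneg _) (by rw [hq]; push_cast; field_simp),
        aux_rpow _ _ _ 1 (abs_nonneg _) (by push_cast; field_simp), Real.rpow_one] at y
      have y2 := mul_le_mul (hb x) y (by positivity) hA.le
      calc _ = |v x| * (1 * |iteratedDeriv 1 v x| ^ q * |iteratedDeriv 2 v x|) := by ring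
        _ ≤ _ := y2
        _ = _ := by ring
    have d1 (c : ℝ) : IntervalIntegrable (fun x => c * |iteratedDeriv 1 v x| ^
        (2 * m / (1:ℕ) : ℝ)) volume 0 1 := (c1'.intervalIntegrable _ _).const_mul c
    have d2 (c : ℝ) : IntervalIntegrable (fun x => c * |iteratedDeriv 2 v x| ^
        (2 * m / (2:ℕ) : ℝ)) volume 0 1 := (c2'.intervalIntegrable _ _).const_mul c
    rw [intervalIntegral.integral_add (d1 _) (d2 _),
      intervalIntegral.integral_const_mul, intervalIntegral.integral_const_mul] at hle
    have e1 : ∫ x in (0:ℝ)..1, |iteratedDeriv 1 v x| ^ (q + 2) = auxI m 1 v := by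
      unfold auxI; congr 1; ext x; congr 1; rw [hq]; push_cast; ring
    rw [e1] at hs
    change _ ≤ _ * auxI m 1 v + _ * auxI m 2 v at hle
    have h3 := hs.trans (mul_le_mul_of_nonneg_left hle (by linarith : 0 ≤ q + 1))
    have h4 : (q + 1) * (A * (1 / (2 * (q + 1) * A)) * auxI m 1 v + A * C * auxI m 2 v)
        = auxI m 1 v / 2 + (q + 1) * A * C * auxI m 2 v := by
      have : q + 1 ≠ 0 := by linarith
      field_simp
    rw [h4] at h3
    change auxI m 1 v ≤ _ * auxI m 2 v
    linarith
  | succ j ih =>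
    obtain ⟨C₀, hC₀, ih⟩ := ih (by omega)
    have hm : (j + 2:ℝ) < m := by
      have : ((j + 1 + 1 : ℕ) : ℝ) < m := by exact_mod_cast hj
      push_cast at this; linarith
    have hj0 : (0:ℝ) ≤ j := Nat.cast_nonneg j
    have hm0 : (0:ℝ) < m := by linarith
    set q : ℝ := 2 * m / (j + 2) - 2 with hq
    have hq0 : 0 < q := by
      rw [hq, sub_pos, lt_div_iff₀ (by linarith)]; linarith
    obtain ⟨C, hC, hY⟩ := aux_young ((j + 1) / (2 * m)) ((m - (j + 2)) / m) ((j + 3) / (2 * m))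
      (1 / (4 * (q + 1) * (C₀ + 1))) (by positivity)
      (div_nonneg (by linarith) hm0.le) (by positivity) (by field_simp; ring) (by positivity)
    set ε := (1 / (4 * (q + 1) * (C₀ + 1))) with hε
    refine ⟨2 * ((q + 1) * C), by positivity, ?_⟩
    intro v hv hp hb
    have ih := ih v hv hp hb
    have hs := aux_step q hq0 (iteratedDeriv (j + 1) v) (iteratedDeriv (j + 2) v)
      (iteratedDeriv (j + 3) v)
      (fun x => aux_der hv _ x) (fun x => aux_der hv _ x) (aux_cont hv _)
      (aux_per hp _) (aux_per hp _)
    have c0 := (aux_cont hv (j + 1)).abs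
    have c0' := aux_contI hv (j + 1) (2 * m / (j + 1 : ℕ)) (by positivity)
    have c1 := aux_contI hv (j + 2) q hq0.le
    have c1' := aux_contI hv (j + 2) (2 * m / (j + 2 : ℕ)) (by positivity)
    have c2 := (aux_cont hv (j + 3)).abs
    have c2' := aux_contI hv (j + 3) (2 * m / (j + 3 : ℕ)) (by positivity)
    have hle : ∫ x in (0:ℝ)..1, |iteratedDeriv (j + 1) v x| * |iteratedDeriv (j + 2) v x| ^ q
          * |iteratedDeriv (j + 3) v x| ≤
        ∫ x in (0:ℝ)..1, (ε * |iteratedDeriv (j + 1) v x| ^ (2 * m / (j + 1 : ℕ) : ℝ)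
          + ε * |iteratedDeriv (j + 2) v x| ^ (2 * m / (j + 2 : ℕ) : ℝ)
          + C * |iteratedDeriv (j + 3) v x| ^ (2 * m / (j + 3 : ℕ) : ℝ)) := by
      refine intervalIntegral.integral_mono_on (by norm_num)
        (((c0.mul c1).mul c2).intervalIntegrable _ _)
        ((((continuous_const.mul c0').add (continuous_const.mul c1')).add
          (continuous_const.mul c2')).intervalIntegrable _ _) ?_
      intro x _
      have y := hY (|iteratedDeriv (j + 1) v x| ^ (2 * m / (j + 1 : ℕ) : ℝ))
        (|iteratedDeriv (j + 2) v x| ^ (2 * m / (j + 2 : ℕ) : ℝ))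
        (|iteratedDeriv (j + 3) v x| ^ (2 * m / (j + 3 : ℕ) : ℝ))
        (by positivity) (by positivity) (by positivity)
      rwa [aux_rpow _ _ _ 1 (abs_nonneg _) (by push_cast; field_simp),
        aux_rpow _ _ _ q (abs_nonneg _) (by rw [hq]; push_cast; field_simp),
        aux_rpow _ _ _ 1 (abs_nonneg _) (by push_cast; field_simp),
        Real.rpow_one, Real.rpow_one] at y
    have d0 : IntervalIntegrable (fun x => ε * |iteratedDeriv (j + 1) v x| ^
        (2 * m / (j + 1 : ℕ) : ℝ)) volume 0 1 := (c0'.intervalIntegrable _ _).const_mul _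
    have d1 : IntervalIntegrable (fun x => ε * |iteratedDeriv (j + 2) v x| ^
        (2 * m / (j + 2 : ℕ) : ℝ)) volume 0 1 := (c1'.intervalIntegrable _ _).const_mul _
    have d2 : IntervalIntegrable (fun x => C * |iteratedDeriv (j + 3) v x| ^
        (2 * m / (j + 3 : ℕ) : ℝ)) volume 0 1 := (c2'.intervalIntegrable _ _).const_mul _
    rw [intervalIntegral.integral_add (d0.add d1) d2, intervalIntegral.integral_add d0 d1,
      intervalIntegral.integral_const_mul, intervalIntegral.integral_const_mul,
      intervalIntegral.integral_const_mul] at hle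
    have e1 : ∫ x in (0:ℝ)..1, |iteratedDeriv (j + 2) v x| ^ (q + 2) = auxI m (j + 2) v := by
      unfold auxI; congr 1; ext x; congr 1; rw [hq]; push_cast; ring
    rw [e1] at hs
    change _ ≤ _ * auxI m (j + 1) v + _ * auxI m (j + 2) v + _ * auxI m (j + 3) v at hle
    have h3 := hs.trans (mul_le_mul_of_nonneg_left hle (by linarith : 0 ≤ q + 1))
    change auxI m (j + 1) v ≤ _ * auxI m (j + 2) v at ih
    have hεpos : 0 < ε := by rw [hε]; positivity
    have h4 : (q + 1) * (ε * auxI m (j + 1) v) ≤ (q + 1) * (ε * (C₀ * auxI m (j + 2) v)) := by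
      gcongr
    have h5 : (q + 1) * (ε * (C₀ * auxI m (j + 2) v)) + (q + 1) * (ε * auxI m (j + 2) v)
        = auxI m (j + 2) v / 4 := by
      rw [hε]
      have : q + 1 ≠ 0 := by linarith
      field_simp
    change auxI m (j + 2) v ≤ _ * auxI m (j + 3) v
    have := auxI_nonneg m (j + 2) v
    linarith

lemma aux_gn' (m : ℕ) (A : ℝ) (hA : 0 < A) (d k : ℕ) (hk : 1 ≤ k) (hd : k + d = m) :
    ∃ C > 0, ∀ v : ℝ → ℝ, ContDiff ℝ (⊤ : ℕ∞) v → (∀ x, v (x + 1) = v x) →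
      (∀ x, |v x| ≤ A) → auxI m k v ≤ C * auxI m m v := by
  induction d generalizing k with
  | zero =>
    obtain rfl : k = m := by omega
    exact ⟨1, one_pos, fun v _ _ _ => by simp⟩
  | succ d ih =>
    obtain ⟨C, hC, h⟩ := ih (k + 1) (by omega) (by omega)
    obtain ⟨j, rfl⟩ : ∃ j, k = j + 1 := ⟨k - 1, by omega⟩
    obtain ⟨C', hC', h'⟩ := aux_gn m A hA j (by omega)
    refine ⟨C' * C, by positivity, fun v h1 h2 h3 => ?_⟩
    calc _ ≤ _ := h' v h1 h2 h3
      _ ≤ C' * (C * auxI m m v) := by gcongr; exact h v h1 h2 h3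
      _ = _ := by ring

lemma aux_gn_sum (m : ℕ) (A : ℝ) (hA : 0 < A) :
    ∃ C > 0, ∀ v : ℝ → ℝ, ContDiff ℝ (⊤ : ℕ∞) v → (∀ x, v (x + 1) = v x) →
      (∀ x, |v x| ≤ A) → ∑ k ∈ Finset.Icc 1 m, auxI m k v ≤ C * auxI m m v := by
  have h : ∀ k, ∃ C > 0, k ∈ Finset.Icc 1 m → ∀ v : ℝ → ℝ, ContDiff ℝ (⊤ : ℕ∞) v →
      (∀ x, v (x + 1) = v x) → (∀ x, |v x| ≤ A) → auxI m k v ≤ C * auxI m m v := by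
    intro k
    by_cases hk : k ∈ Finset.Icc 1 m
    · have hk' := Finset.mem_Icc.1 hk
      obtain ⟨C, hC, h⟩ := aux_gn' m A hA (m - k) k hk'.1 (by omega)
      exact ⟨C, hC, fun _ => h⟩
    · exact ⟨1, one_pos, fun h => absurd h hk⟩
  choose C hC h using h
  refine ⟨∑ k ∈ Finset.Icc 1 m, C k + 1, ?_, ?_⟩
  · have := Finset.sum_nonneg (s := Finset.Icc 1 m) (f := C) fun k _ => (hC k).le
    linarith
  · intro v h1 h2 h3
    have : ∑ k ∈ Finset.Icc 1 m, auxI m k v ≤ ∑ k ∈ Finset.Icc 1 m, C k * auxI m m v :=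
      Finset.sum_le_sum fun k hk => h k hk v h1 h2 h3
    rw [← Finset.sum_mul] at this
    have := auxI_nonneg m m v
    linarith

lemma aux_comp (m : ℕ) (hm : 1 ≤ m) (B : ℝ) (f v : ℝ → ℝ)
    (hf : ContDiff ℝ (⊤ : ℕ∞) f) (hv : ContDiff ℝ (⊤ : ℕ∞) v) (x : ℝ)
    (hB : ∀ k ≤ m, |iteratedDeriv k f (v x)| ≤ B) :
    (iteratedDeriv m (f ∘ v) x) ^ 2 ≤ (m.factorial * B) ^ 2 *
      ∑ k ∈ Finset.Icc 1 m, |iteratedDeriv k v x| ^ (2 * m / k : ℝ) := by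
  set S := ∑ k ∈ Finset.Icc 1 m, |iteratedDeriv k v x| ^ (2 * m / k : ℝ) with hS
  have hS0 : 0 ≤ S := Finset.sum_nonneg fun k _ => by positivity
  have hm0 : (0:ℝ) < m := by exact_mod_cast hm
  have h := norm_iteratedFDeriv_comp_le (n := m) (D := S ^ (1 / (2 * m) : ℝ)) hf hv
    (by exact_mod_cast le_top) x (C := B)
    (fun i hi => by
      rw [norm_iteratedFDeriv_eq_norm_iteratedDeriv, Real.norm_eq_abs]; exact hB i hi)
    (fun i hi him => by
      rw [norm_iteratedFDeriv_eq_norm_iteratedDeriv, Real.norm_eq_abs]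
      have hi0 : (0:ℝ) < i := by exact_mod_cast hi
      have h1 : |iteratedDeriv i v x| ^ (2 * m / i : ℝ) ≤ S :=
        Finset.single_le_sum (f := fun k : ℕ => |iteratedDeriv k v x| ^ (2 * m / k : ℝ))
          (fun k _ => by positivity) (Finset.mem_Icc.2 ⟨hi, him⟩)
      have h2 := Real.rpow_le_rpow (by positivity) h1 (by positivity : (0:ℝ) ≤ i / (2 * m))
      rw [aux_rpow _ _ _ 1 (abs_nonneg _) (by field_simp), Real.rpow_one] at h2
      refine h2.trans (le_of_eq ?_)
      rw [← Real.rpow_natCast, ← Real.rpow_mul hS0]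
      congr 1; field_simp)
  rw [norm_iteratedFDeriv_eq_norm_iteratedDeriv, Real.norm_eq_abs] at h
  have h2 := pow_le_pow_left₀ (abs_nonneg _) h 2
  rw [sq_abs] at h2
  refine h2.trans (le_of_eq ?_)
  rw [mul_pow]
  congr 1
  rw [← pow_mul, ← Real.rpow_natCast, ← Real.rpow_mul hS0]
  have : (1 / (2 * m) : ℝ) * ((m * 2 : ℕ) : ℝ) = 1 := by push_cast; field_simp
  rw [this, Real.rpow_one]

lemma aux_memLp (g : ℝ → ℝ) (hg : Continuous g) (p : ℝ≥0∞) :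
    MemLp g p (volume.restrict (Ioc (0:ℝ) 1)) := by
  obtain ⟨C, hC⟩ := isCompact_Icc.exists_bound_of_continuousOn
    (hg.continuousOn (s := Icc (0:ℝ) 1))
  refine MemLp.of_bound hg.aestronglyMeasurable C ?_
  filter_upwards [ae_restrict_mem measurableSet_Ioc] with x hx
  exact hC x (Ioc_subset_Icc_self hx)

lemma aux_sob {v : ℝ → ℝ} (hv : ContDiff ℝ (⊤ : ℕ∞) v) (k : ℕ) :
    sobLp k 2 v = (∫ x in Ioc (0:ℝ) 1, |iteratedDeriv k v x| ^ (2:ℝ)) ^ (1 / 2 : ℝ) := by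
  have hmem : MemLp (iteratedDeriv k v) 2 (volume.restrict (Ioc (0:ℝ) 1)) :=
    aux_memLp _ (aux_cont hv k) _
  unfold sobLp
  rw [hmem.eLpNorm_eq_integral_rpow_norm (by norm_num) (by norm_num),
    ENNReal.toReal_ofReal (by positivity)]
  simp

/-- Let `f` be smooth, `m ≥ 1`, `A > 0`. There is a constant
`C̃ > 0` depending only on `m`, `A` and the `C^{m+1}` norm of `f` on `[-A,A]`
(encoded here by a bound `B` on that norm) such that for every smooth
zero-mean `1`-periodic `v` with `|v|_∞ ≤ A`,
`|∫_{S¹} v⁽ᵐ⁾ (f(v))⁽ᵐ⁺¹⁾| ≤ C̃ ‖v‖_m ‖v‖_{m+1}`. -/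
theorem statement3 (m : ℕ) (hm : 1 ≤ m) (A B : ℝ) (hA : 0 < A) (hB : 0 < B) :
    ∃ C > 0, ∀ f : ℝ → ℝ, ContDiff ℝ (⊤ : ℕ∞) f →
      (∀ k ≤ m + 1, ∀ y ∈ Icc (-A) A, |iteratedDeriv k f y| ≤ B) →
      ∀ v : ℝ → ℝ, ContDiff ℝ (⊤ : ℕ∞) v → (∀ x, v (x + 1) = v x) →
        (∫ x in Ioc (0:ℝ) 1, v x) = 0 → (∀ x, |v x| ≤ A) →
        |∫ x in Ioc (0:ℝ) 1, iteratedDeriv m v x * iteratedDeriv (m + 1) (f ∘ v) x|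
          ≤ C * sobLp m 2 v * sobLp (m + 1) 2 v := by
  obtain ⟨K, hK, hKv⟩ := aux_gn_sum m A hA
  have hm0 : (0:ℝ) < m := by exact_mod_cast hm
  refine ⟨m.factorial * B * K ^ (1 / 2 : ℝ), by positivity, ?_⟩
  intro f hf hfB v hv hp _ hb
  have hg : ContDiff ℝ (⊤ : ℕ∞) (f ∘ v) := hf.comp hv
  have hgp : ∀ x, (f ∘ v) (x + 1) = (f ∘ v) x := fun x => by simp [hp x]
  have ibp := intervalIntegral.integral_mul_deriv_eq_deriv_mul (a := 0) (b := 1)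
    (u := iteratedDeriv m v) (v := iteratedDeriv m (f ∘ v))
    (fun x _ => aux_der hv m x) (fun x _ => aux_der hg m x)
    ((aux_cont hv _).intervalIntegrable _ _) ((aux_cont hg _).intervalIntegrable _ _)
  rw [aux_per hp, aux_per hgp, sub_self, zero_sub] at ibp
  rw [intervalIntegral.integral_of_le zero_le_one,
    intervalIntegral.integral_of_le zero_le_one] at ibp
  rw [ibp, abs_neg]
  have hmem : ∀ g : ℝ → ℝ, Continuous g →
      MemLp g (ENNReal.ofReal 2) (volume.restrict (Ioc (0:ℝ) 1)) := fun g hg =>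
    aux_memLp g hg _
  have cs := integral_mul_le_Lp_mul_Lq_of_nonneg (μ := volume.restrict (Ioc (0:ℝ) 1))
    (Real.HolderConjugate.two_two)
    (f := fun x => |iteratedDeriv (m + 1) v x|) (g := fun x => |iteratedDeriv m (f ∘ v) x|)
    (Filter.Eventually.of_forall fun x => abs_nonneg _)
    (Filter.Eventually.of_forall fun x => abs_nonneg _)
    (hmem _ (aux_cont hv _).abs) (hmem _ (aux_cont hg _).abs)
  have h1 : |∫ x in Ioc (0:ℝ) 1, iteratedDeriv (m + 1) v x * iteratedDeriv m (f ∘ v) x| ≤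
      ∫ x in Ioc (0:ℝ) 1, |iteratedDeriv (m + 1) v x| * |iteratedDeriv m (f ∘ v) x| := by
    refine abs_integral_le_integral_abs.trans (le_of_eq ?_)
    simp only [abs_mul]
  rw [← aux_sob hv] at cs
  have h2 : ∫ x in Ioc (0:ℝ) 1, |iteratedDeriv m (f ∘ v) x| ^ (2:ℝ) ≤
      (m.factorial * B) ^ 2 * (K * ∫ x in Ioc (0:ℝ) 1, |iteratedDeriv m v x| ^ (2:ℝ)) := by
    have e : auxI m m v = ∫ x in Ioc (0:ℝ) 1, |iteratedDeriv m v x| ^ (2:ℝ) := by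
      unfold auxI
      rw [intervalIntegral.integral_of_le zero_le_one]
      congr 1; ext x; congr 1; field_simp
    rw [← e, ← intervalIntegral.integral_of_le zero_le_one]
    have ck : ∀ k, Continuous (fun x => |iteratedDeriv k v x| ^ (2 * m / k : ℝ)) :=
      fun k => aux_contI hv k _ (by positivity)
    calc _ ≤ ∫ x in (0:ℝ)..1, (m.factorial * B) ^ 2 *
          ∑ k ∈ Finset.Icc 1 m, |iteratedDeriv k v x| ^ (2 * m / k : ℝ) := by
          refine intervalIntegral.integral_mono_on zero_le_one
            ((aux_contI hg m 2 (by norm_num)).intervalIntegrable _ _)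
            ((continuous_const.mul
              (continuous_finsetSum _ fun k _ => ck k)).intervalIntegrable _ _) ?_
          intro x _
          rw [Real.rpow_two, sq_abs]
          exact aux_comp m hm B f v hf hv x
            (fun k hk => hfB k (by omega) _ (abs_le.1 (hb x)))
      _ = (m.factorial * B) ^ 2 * ∑ k ∈ Finset.Icc 1 m, auxI m k v := by
          rw [intervalIntegral.integral_const_mul, intervalIntegral.integral_finsetSum
            (fun k _ => (ck k).intervalIntegrable _ _)]
          rfl
      _ ≤ _ := by gcongr; exact hKv v hv hp hb
  have h3 := Real.rpow_le_rpow (by positivity) h2 (by norm_num : (0:ℝ) ≤ 1 / 2)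
  rw [Real.mul_rpow (by positivity) (by positivity), Real.mul_rpow hK.le (by positivity),
    ← aux_sob hv, ← Real.sqrt_eq_rpow ((m.factorial * B) ^ 2),
    Real.sqrt_sq (by positivity)] at h3
  have h0 : 0 ≤ sobLp (m + 1) 2 v := ENNReal.toReal_nonneg
  calc _ ≤ _ := h1
    _ ≤ _ := cs
    _ ≤ sobLp (m + 1) 2 v * (m.factorial * B * (K ^ (1 / 2 : ℝ) * sobLp m 2 v)) := by gcongr
    _ = _ := by ring
end
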